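/- Let Σ be a finite set, F a set of finitary operations on ℘(Σ), and 𝒜₀ a Moore family on Σ. Consider sequences 𝒜₀, 𝒜₁, 𝒜₂, … of Moore families in which 𝒜_{i+1} = M(𝒜_i ∪ {f_i(S⃗_i)}) for some f_i ∈ F and some tuple S⃗_i ∈ 𝒜_i^{n_{f_i}} with f_i(S⃗_i) ∉ 𝒜_i. Every such sequence is finite, and whenever such a sequence ends at a forward F-complete Moore family 𝒜_n, then 𝒜_n = S_F(𝒜₀), the least forward F-complete Moore family containing 𝒜₀. -/

import Mathlib

universe u v

variable {X : Type u} {A : Type v}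

/-- A Moore family: a collection of subsets closed under arbitrary intersections. -/
def IsMoore (M : Set (Set X)) : Prop := ∀ S ⊆ M, ⋂₀ S ∈ M

/-- The least Moore family containing `C`. -/
def mClose (C : Set (Set X)) : Set (Set X) := ⋂₀ {M | IsMoore M ∧ C ⊆ M}

/-- A disjunctive Moore family: additionally closed under arbitrary unions. -/
def IsDisjMoore (M : Set (Set X)) : Prop := IsMoore M ∧ ∀ S ⊆ M, ⋃₀ S ∈ M

/-- The least disjunctive Moore family containing `C`. -/
def dClose (C : Set (Set X)) : Set (Set X) := ⋂₀ {M | IsDisjMoore M ∧ C ⊆ M}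

/-- The closure operator associated with a Moore family. -/
def mu (M : Set (Set X)) (S : Set X) : Set X := ⋂₀ {T | T ∈ M ∧ S ⊆ T}

/-- The partition (as a setoid) induced by a Moore family:
`s ≡ s'` iff `μ {s} = μ {s'}`. -/
def prS (M : Set (Set X)) : Setoid X :=
  ⟨fun s t => mu M {s} = mu M {t}, ⟨fun _ => rfl, Eq.symm, Eq.trans⟩⟩

/-- The Moore family of all `P`-saturated sets (unions of blocks of `P`). -/
def padS (P : Setoid X) : Set (Set X) := {S | ∀ s ∈ S, ∀ t, P.r s t → t ∈ S}

/-- `P` refines `Q`: every block of `P` is contained in a block of `Q`. -/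
def refines (P Q : Setoid X) : Prop := ∀ s t, P.r s t → Q.r s t

/-- A finitary operation on `℘(X)`: an arity `n` together with a map `℘(X)^n → ℘(X)`. -/
abbrev Op (X : Type u) := (n : ℕ) × ((Fin n → Set X) → Set X)

/-- The image `F(S)` of a set of operations on a collection of subsets. -/
def imageF (F : Set (Op X)) (S : Set (Set X)) : Set (Set X) :=
  {T | ∃ f ∈ F, ∃ args : Fin f.1 → Set X, (∀ i, args i ∈ S) ∧ T = f.2 args}

/-- Forward `F`-completeness: `F(S) ⊆ S`. -/
def FComplete (F : Set (Op X)) (S : Set (Set X)) : Prop := imageF F S ⊆ S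

/-- The forward `F`-complete shell: the least forward `F`-complete Moore family
containing `M`. -/
def shellF (F : Set (Op X)) (M : Set (Set X)) : Set (Set X) :=
  ⋂₀ {B | IsMoore B ∧ FComplete F B ∧ M ⊆ B}

/-- Predecessor operator of a transition relation. -/
def preR (r : X → X → Prop) (S : Set X) : Set X := {s | ∃ t ∈ S, r s t}

/-- The split of a partition `P` by a set `T`: blocks are the nonempty sets
among `B ∩ T` and `B \ T` for blocks `B` of `P`. -/
def splitS (T : Set X) (P : Setoid X) : Setoid X :=
  ⟨fun s t => P.r s t ∧ (s ∈ T ↔ t ∈ T),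
   ⟨fun s => ⟨P.iseqv.refl s, Iff.rfl⟩,
    fun h => ⟨P.iseqv.symm h.1, h.2.symm⟩,
    fun h1 h2 => ⟨P.iseqv.trans h1.1 h2.1, h1.2.trans h2.2⟩⟩⟩

/-- Abstract refinement: `refine_f^A(S, a) = α(M(γ(a) ∪ {f(S)}))`. -/
def refineA [Preorder A] (al : Set (Set X) → A) (ga : A → Set (Set X))
    (f : Op X) (S : Fin f.1 → Set X) (a : A) : A :=
  al (mClose (ga a ∪ {f.2 S}))

/-- Abstract refiners: tuples in `γ(a)^n` whose refinement is strictly below `a`. -/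
def refinersA [Preorder A] (al : Set (Set X) → A) (ga : A → Set (Set X))
    (f : Op X) (a : A) : Set (Fin f.1 → Set X) :=
  {S | (∀ i, S i ∈ ga a) ∧ refineA al ga f S a < a}

/-- One step of the GPT algorithm: refine by some refiner of some `f ∈ F`. -/
def StepA [Preorder A] (F : Set (Op X)) (al : Set (Set X) → A) (ga : A → Set (Set X))
    (a b : A) : Prop :=
  ∃ f ∈ F, ∃ S : Fin f.1 → Set X, S ∈ refinersA al ga f a ∧ b = refineA al ga f S a

/-- The setoid induced by a collection of sets: `s ≡ t` iff no set of the
collection separates them. -/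
def indSetoid (C : Set (Set X)) : Setoid X :=
  ⟨fun s t => ∀ T ∈ C, (s ∈ T ↔ t ∈ T),
   ⟨fun _ _ _ => Iff.rfl, fun h T hT => (h T hT).symm,
    fun h1 h2 T hT => (h1 T hT).trans (h2 T hT)⟩⟩

/-- The block of `P` containing `s`. -/
def blockOf (P : Setoid X) (s : X) : Set X := {t | P.r s t}

/-- The existential-until operator `EU(S₁, S₂)`. -/
def EUset (r : X → X → Prop) (S1 S2 : Set X) : Set X :=
  S2 ∪ {s | s ∈ S1 ∧ ∃ (n : ℕ) (p : ℕ → X), p 0 = s ∧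
    (∀ i < n, p i ∈ S1 ∧ r (p i) (p (i+1))) ∧ p n ∈ S2}

/-!
Each step adjoins a set that every forward `F`-complete Moore family containing the current one must
contain, so the shell is an invariant of the sequence. A complete Moore family is its own shell,
hence a sequence that ends at one ends at the shell of its first term. The terms grow strictly
inside this common shell, so the sequence is finite when the shell adds only finitely many sets.
-/

open Relation Set

theorem reflTransGen_of_forall_lt_succ {α : Type*} {r : α → α → Prop} {seq : ℕ → α} {n : ℕ}
    (h : ∀ i < n, r (seq i) (seq (i + 1))) : ReflTransGen r (seq 0) (seq n) :=
  (reflTransGen_of_succ_of_le (fun i j => r (seq i) (seq j))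
    (fun i hi => h i hi.2) n.zero_le).lift seq fun _ _ => id

section MooreClosure

variable {C M : Set (Set X)}

theorem subset_mClose : C ⊆ mClose C :=
  subset_sInter fun _ hM => hM.2

theorem mClose_subset (hM : IsMoore M) (hCM : C ⊆ M) : mClose C ⊆ M :=
  sInter_subset_of_mem ⟨hM, hCM⟩

theorem isMoore_sInter {𝓜 : Set (Set (Set X))} (h𝓜 : ∀ M ∈ 𝓜, IsMoore M) : IsMoore (⋂₀ 𝓜) :=
  fun S hS M hM => h𝓜 M hM S (hS.trans (sInter_subset_of_mem hM))

theorem isMoore_mClose : IsMoore (mClose C) :=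
  isMoore_sInter fun _ hM => hM.1

end MooreClosure

section Shell

variable {F : Set (Op X)} {M N : Set (Set X)}

theorem imageF_mono (hMN : M ⊆ N) : imageF F M ⊆ imageF F N := by
  rintro _ ⟨f, hf, S, hS, rfl⟩
  exact ⟨f, hf, S, fun i => hMN (hS i), rfl⟩

theorem FComplete.apply_mem (hM : FComplete F M) {f : Op X} (hf : f ∈ F)
    {S : Fin f.1 → Set X} (hS : ∀ i, S i ∈ M) : f.2 S ∈ M :=
  hM ⟨f, hf, S, hS, rfl⟩

theorem fComplete_sInter {𝓜 : Set (Set (Set X))} (h𝓜 : ∀ M ∈ 𝓜, FComplete F M) :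
    FComplete F (⋂₀ 𝓜) :=
  subset_sInter fun M hM => (imageF_mono (sInter_subset_of_mem hM)).trans (h𝓜 M hM)

theorem subset_shellF : M ⊆ shellF F M :=
  subset_sInter fun _ hB => hB.2.2

theorem shellF_subset (hN : IsMoore N) (hFN : FComplete F N) (hMN : M ⊆ N) : shellF F M ⊆ N :=
  sInter_subset_of_mem ⟨hN, hFN, hMN⟩

theorem isMoore_shellF : IsMoore (shellF F M) :=
  isMoore_sInter fun _ hB => hB.1

theorem fComplete_shellF : FComplete F (shellF F M) :=
  fComplete_sInter fun _ hB => hB.2.1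

theorem shellF_mono (hMN : M ⊆ N) : shellF F M ⊆ shellF F N :=
  shellF_subset isMoore_shellF fComplete_shellF (hMN.trans subset_shellF)

theorem shellF_eq_self (hM : IsMoore M) (hFM : FComplete F M) : shellF F M = M :=
  (shellF_subset hM hFM Subset.rfl).antisymm subset_shellF

end Shell

/-- A step `𝒜ᵢ ↦ 𝒜ᵢ₊₁` of the refinement process: `N` is the least Moore family containing `M` and
one value `f(S) ∉ M` of an operation `f ∈ F` on members of `M`. It is written as a relation because
`f` and `S` are chosen freely at each step. -/
def RefinementStep (F : Set (Op X)) (M N : Set (Set X)) : Prop :=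
  ∃ f ∈ F, ∃ S : Fin f.1 → Set X, (∀ j, S j ∈ M) ∧ f.2 S ∉ M ∧ N = mClose (M ∪ {f.2 S})

section Refinement

variable {F : Set (Op X)} {M N : Set (Set X)}

namespace RefinementStep

theorem isMoore (h : RefinementStep F M N) : IsMoore N := by
  obtain ⟨f, -, S, -, -, rfl⟩ := h
  exact isMoore_mClose

theorem ssubset (h : RefinementStep F M N) : M ⊂ N := by
  obtain ⟨f, -, S, -, hnew, rfl⟩ := h
  exact (ssubset_iff_of_subset (subset_union_left.trans subset_mClose)).2
    ⟨f.2 S, subset_mClose (mem_union_right M rfl), hnew⟩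

theorem next_subset_shellF (h : RefinementStep F M N) : N ⊆ shellF F M := by
  obtain ⟨f, hf, S, hS, -, rfl⟩ := h
  have hfS : f.2 S ∈ shellF F M := fComplete_shellF.apply_mem hf fun i => subset_shellF (hS i)
  exact mClose_subset isMoore_shellF (union_subset subset_shellF (singleton_subset_iff.2 hfS))

theorem shellF_eq (h : RefinementStep F M N) : shellF F N = shellF F M :=
  (shellF_subset isMoore_shellF fComplete_shellF h.next_subset_shellF).antisymm
    (shellF_mono h.ssubset.subset)

end RefinementStep

theorem isMoore_of_reflTransGen_refinementStep (hM : IsMoore M)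
    (h : ReflTransGen (RefinementStep F) M N) : IsMoore N := by
  cases h with
  | refl => exact hM
  | tail _ hstep => exact hstep.isMoore

theorem shellF_eq_of_reflTransGen_refinementStep (h : ReflTransGen (RefinementStep F) M N) :
    shellF F N = shellF F M := by
  induction h with
  | refl => rfl
  | tail _ hstep ih => exact hstep.shellF_eq.trans ih

theorem eq_shellF_of_reflTransGen_refinementStep (hM : IsMoore M)
    (h : ReflTransGen (RefinementStep F) M N) (hFN : FComplete F N) : N = shellF F M :=
  calc
    N = shellF F N := (shellF_eq_self (isMoore_of_reflTransGen_refinementStep hM h) hFN).symm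
    _ = shellF F M := shellF_eq_of_reflTransGen_refinementStep h

theorem infinite_shellF_sdiff_of_refinementStep {seq : ℕ → Set (Set X)}
    (h : ∀ i, RefinementStep F (seq i) (seq (i + 1))) : (shellF F (seq 0) \ seq 0).Infinite := by
  have hmono : StrictMono seq := strictMono_nat_of_lt_succ fun i => (h i).ssubset
  have hshell (i : ℕ) : seq i ⊆ shellF F (seq 0) :=
    subset_shellF.trans_eq <|
      shellF_eq_of_reflTransGen_refinementStep (reflTransGen_of_forall_lt_succ fun j _ => h j)
  have hinj : Function.Injective fun i => seq i \ seq 0 := fun i j hij =>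
    hmono.injective <| by
      rw [← sdiff_union_of_subset (hmono.monotone i.zero_le),
        ← sdiff_union_of_subset (hmono.monotone j.zero_le)]
      exact congrArg (· ∪ seq 0) hij
  exact fun hfin => infinite_of_injective_forall_mem hinj
    (fun i => sdiff_subset_sdiff_left (hshell i)) hfin.finite_subsets

end Refinement

theorem stmt7_general (F : Set (Op X)) (M0 : Set (Set X)) (hM0 : IsMoore M0)
    (hfin : (shellF F M0 \ M0).Finite) :
    (¬ ∃ seq : ℕ → Set (Set X), seq 0 = M0 ∧ ∀ i, RefinementStep F (seq i) (seq (i + 1))) ∧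
    (∀ (n : ℕ) (seq : ℕ → Set (Set X)), seq 0 = M0 →
      (∀ i < n, RefinementStep F (seq i) (seq (i + 1))) →
      FComplete F (seq n) → seq n = shellF F M0) := by
  constructor
  · rintro ⟨seq, rfl, hstep⟩
    exact infinite_shellF_sdiff_of_refinementStep hstep hfin
  · rintro n seq rfl hstep hcomplete
    exact eq_shellF_of_reflTransGen_refinementStep hM0
      (reflTransGen_of_forall_lt_succ hstep) hcomplete

theorem stmt7 [Finite X] (F : Set (Op X)) (M0 : Set (Set X)) (hM0 : IsMoore M0) :
    (¬ ∃ seq : ℕ → Set (Set X), seq 0 = M0 ∧ ∀ i : ℕ,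
      ∃ f ∈ F, ∃ S : Fin f.1 → Set X, (∀ j, S j ∈ seq i) ∧ f.2 S ∉ seq i ∧
        seq (i + 1) = mClose (seq i ∪ {f.2 S})) ∧
    (∀ (n : ℕ) (seq : ℕ → Set (Set X)), seq 0 = M0 →
      (∀ i < n, ∃ f ∈ F, ∃ S : Fin f.1 → Set X, (∀ j, S j ∈ seq i) ∧ f.2 S ∉ seq i ∧
        seq (i + 1) = mClose (seq i ∪ {f.2 S})) →
      FComplete F (seq n) → seq n = shellF F M0) :=
  stmt7_general F M0 hM0 (toFinite _)
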